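/- For every ε > 0 there exists C_ε > 0 such that, uniformly in dyadic N, N₁, N₂, N₃ ≥ 1 and m ∈ ℤ, the operator norm of the base tensor h^{𝐍,(m)} viewed as a linear map from ℓ²(ℤ²) (variable n₂) to ℓ²((ℤ²)³) (variables (n, n₁, n₃)), i.e. the map sending f to (n, n₁, n₃) ↦ ∑_{n₂} h^{𝐍,(m)}(n, n₁, n₂, n₃) f(n₂), is at most C_ε · min( N (min(N₁, N₃))^ε, (N N₁)^{1/2 + ε}, (N N₃)^{1/2 + ε}, (N₁ N₃)^{1/2 + ε} ). -/

import Mathlib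

/-- Euclidean norm of a lattice point in `ℤ²`. -/
noncomputable def znorm (n : ℤ × ℤ) : ℝ := Real.sqrt ((n.1 : ℝ) ^ 2 + (n.2 : ℝ) ^ 2)

/-- Squared Euclidean norm `|n|²` of `n ∈ ℤ²`, as an integer. -/
def nsq (n : ℤ × ℤ) : ℤ := n.1 ^ 2 + n.2 ^ 2

/-- `φ(n̄) = |n|² − |n₁|² + |n₂|² − |n₃|²`. -/
def phiFn (n n₁ n₂ n₃ : ℤ × ℤ) : ℤ := nsq n - nsq n₁ + nsq n₂ - nsq n₃

/-- `N` is a dyadic number: `N = 2^k` for some integer `k ≥ 0`. -/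
def IsDyadic (N : ℝ) : Prop := ∃ k : ℕ, N = 2 ^ k

/-- `|n| ∼ N`: for dyadic `N ≥ 2` this means `N/2 < |n| ≤ N`; for `N = 1` it means `|n| ≤ 1`. -/
def simDyadic (N : ℝ) (n : ℤ × ℤ) : Prop :=
  (N = 1 ∧ znorm n ≤ 1) ∨ (N ≠ 1 ∧ N / 2 < znorm n ∧ znorm n ≤ N)

/-- Membership in the set `S^{𝐍,(m)}`. -/
def SMem (N N₁ N₂ N₃ : ℝ) (m : ℤ) (n n₁ n₂ n₃ : ℤ × ℤ) : Prop :=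
  n = n₁ - n₂ + n₃ ∧ n ≠ n₁ ∧ n ≠ n₃ ∧ phiFn n n₁ n₂ n₃ = m ∧
    simDyadic N n ∧ simDyadic N₁ n₁ ∧ simDyadic N₂ n₂ ∧ simDyadic N₃ n₃ 

-- The base tensor `h^{𝐍,(m)}`: the `{0,1}`-valued indicator of `S^{𝐍,(m)}`.
open Classical in
noncomputable def hten (N N₁ N₂ N₃ : ℝ) (m : ℤ) (n n₁ n₂ n₃ : ℤ × ℤ) : ℝ :=
  if SMem N N₁ N₂ N₃ m n n₁ n₂ n₃ then 1 else 0

/-!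
For given `(n, n₁, n₃)` at most one `n₂` contributes, so the square of the operator norm is at most
the largest number of triples `(n, n₁, n₃)` in the support of the tensor with `n₂ = c` fixed. With
`p = n₁ - c` and `q = n₃ - c` these triples are pairs of nonzero vectors with prescribed inner
product `p · q`, and they are counted in two ways.

* Given `p + q`, the vector `p - q` lies on a circle. Three lattice points at mutual distance at
  most `L` on a circle bound its radius by a power of `L`, and then the divisor bound in `ℤ[i]`
  leaves `O(L ^ ε)` points.
* Given `p`, the vector `q` lies on a line orthogonal to `p`, whose lattice points are spaced by the
  length of the primitive vector `p / gcd p`. Summing the inverse of this length over `p` loses only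
  a logarithm.
-/

open Finset

section DivisorBound

lemma add_one_le_mul_pow {x : ℝ} (hx : 1 < x) (k : ℕ) :
    (k + 1 : ℝ) ≤ (1 + 1 / (x - 1)) * x ^ k := by
  have hx' : 0 < x - 1 := sub_pos.2 hx
  calc (k + 1 : ℝ) ≤ k + 1 + 1 / (x - 1) + k * (x - 1) := by
        have : 0 ≤ 1 / (x - 1) + k * (x - 1) := by positivity
        linarith
    _ = (1 + 1 / (x - 1)) * (1 + k * (x - 1)) := by field_simp; ring
    _ ≤ (1 + 1 / (x - 1)) * x ^ k := by
        gcongr; exact one_add_mul_sub_le_pow (by linarith) k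

lemma add_one_le_pow {x : ℝ} (hx : 2 ≤ x) (k : ℕ) : (k + 1 : ℝ) ≤ x ^ k :=
  calc (k + 1 : ℝ) ≤ 1 + k * (x - 1) := by nlinarith [(k.cast_nonneg : (0 : ℝ) ≤ k)]
    _ ≤ x ^ k := one_add_mul_sub_le_pow (by linarith) k

lemma natCast_rpow_eq_prod_primeFactors {n : ℕ} (hn : n ≠ 0) (ε : ℝ) :
    (n : ℝ) ^ ε = ∏ p ∈ n.primeFactors, ((p : ℝ) ^ ε) ^ n.factorization p := by
  conv_lhs => rw [← Nat.prod_factorization_pow_eq_self hn, Finsupp.prod, Nat.cast_prod,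
    ← Real.finsetProd_rpow _ _ fun _ _ => by positivity]
  refine prod_congr rfl fun p _ => ?_
  rw [Nat.cast_pow, Real.rpow_pow_comm p.cast_nonneg]

/- Only the primes `p < 2 ^ (1 / ε)`, for which `p ^ ε < 2`, cost a constant factor. -/
theorem exists_card_divisors_le_mul_rpow {ε : ℝ} (hε : 0 < ε) :
    ∃ C : ℝ, 1 ≤ C ∧ ∀ n : ℕ, (#n.divisors : ℝ) ≤ C * (n : ℝ) ^ ε := by
  obtain ⟨Q, hQ⟩ := exists_nat_ge ((2 : ℝ) ^ ε⁻¹)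
  set M : ℝ := 1 + 1 / (2 ^ ε - 1)
  have two_rpow : 1 < (2 : ℝ) ^ ε := Real.one_lt_rpow one_lt_two hε
  have hM : 1 ≤ M := le_add_of_nonneg_right (by have := sub_pos.2 two_rpow; positivity)
  have factor_le (p k : ℕ) (hp : 2 ≤ p) :
      (k + 1 : ℝ) ≤ (if p < Q then M else 1) * ((p : ℝ) ^ ε) ^ k := by
    split_ifs with hpQ
    · refine (add_one_le_mul_pow two_rpow k).trans ?_
      gcongr
      exact_mod_cast hp
    · rw [one_mul]
      refine add_one_le_pow ?_ k
      rw [← Real.rpow_inv_le_iff_of_pos zero_le_two p.cast_nonneg hε]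
      exact hQ.trans (by exact_mod_cast not_lt.1 hpQ)
  refine ⟨M ^ Q, one_le_pow₀ hM, fun n => ?_⟩
  obtain rfl | hn := eq_or_ne n 0
  · simp only [Nat.divisors_zero, card_empty, Nat.cast_zero]; positivity
  calc (#n.divisors : ℝ) = ∏ p ∈ n.primeFactors, (n.factorization p + 1 : ℝ) := by
        rw [Nat.card_divisors hn]; push_cast; rfl
    _ ≤ ∏ p ∈ n.primeFactors, (if p < Q then M else 1) * ((p : ℝ) ^ ε) ^ n.factorization p := by
        gcongr with p hp
        exact factor_le p _ (Nat.prime_of_mem_primeFactors hp).two_le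
    _ = M ^ #{p ∈ n.primeFactors | p < Q} * (n : ℝ) ^ ε := by
        rw [prod_mul_distrib, ← natCast_rpow_eq_prod_primeFactors hn, prod_ite, prod_const,
          prod_const_one, mul_one]
    _ ≤ M ^ Q * (n : ℝ) ^ ε := by
        gcongr
        refine (card_le_card fun p hp => ?_).trans_eq (card_range Q)
        exact mem_range.2 (mem_filter.1 hp).2

end DivisorBound

section GaussianIntegers

lemma associated_of_dvd_of_norm_eq {d : ℤ} {z w : ℤ√d} (h : z ∣ w) (hnorm : z.norm = w.norm)
    (hw : w.norm ≠ 0) : Associated z w := by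
  obtain ⟨u, rfl⟩ := h
  have hu : u.norm = 1 := by
    rw [Zsqrtd.norm_mul] at hnorm hw
    exact (mul_eq_left₀ (left_ne_zero_of_mul hw)).1 hnorm.symm
  exact associated_mul_unit_right z u (Zsqrtd.norm_eq_one_iff.1 (by rw [hu]; rfl))

lemma isUnit_of_star_mul_self_dvd {d : ℤ} {π z : ℤ√d} (hz : IsCoprime z.re z.im)
    (h : star π * π ∣ z) : IsUnit π := by
  rw [mul_comm, ← Zsqrtd.norm_eq_mul_conj, Zsqrtd.intCast_dvd] at h
  exact (Zsqrtd.isUnit_iff_norm_isUnit π).2 (hz.isUnit_of_dvd' h.1 h.2)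

lemma isCoprime_star_of_isCoprime_re_im {g b : GaussianInt}
    (h : IsCoprime (g * b).re (g * b).im) : IsCoprime b (star g) := by
  refine isCoprime_of_irreducible_dvd ?_ fun π hπ hπb hπg => hπ.not_isUnit ?_
  · rintro ⟨rfl, -⟩
    rw [mul_zero] at h
    exact not_isCoprime_zero_zero h
  · refine isUnit_of_star_mul_self_dvd h (mul_dvd_mul ?_ hπb)
    simpa only [starRingEnd_apply, star_star] using map_dvd (starRingEnd GaussianInt) hπg

/- With `z = g * b` and `b` coprime to `star g`, the divisor `g` is the gcd of `z` and `g.norm`. -/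
lemma dvd_of_dvd_of_norm_eq {z g h : GaussianInt} (hz : IsCoprime z.re z.im) (hg : g ∣ z)
    (hh : h ∣ z) (hnorm : g.norm = h.norm) : h ∣ g := by
  obtain ⟨b, rfl⟩ := hg
  obtain ⟨u, v, huv⟩ := isCoprime_star_of_isCoprime_re_im hz
  have h_dvd_norm : h ∣ g * star g := by
    rw [← Zsqrtd.norm_eq_mul_conj, hnorm, Zsqrtd.norm_eq_mul_conj]
    exact dvd_mul_right h _
  have hg : g = u * (g * b) + v * (g * star g) := by linear_combination -g * huv
  rw [hg]
  exact dvd_add (hh.mul_left u) (h_dvd_norm.mul_left v)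

lemma associated_of_mul_eq_mul_of_norm_eq {g b h c : GaussianInt}
    (hgb : IsCoprime (g * b).re (g * b).im) (heq : g * b = h * c) (hnorm : g.norm = h.norm) :
    Associated g h ∧ Associated b c := by
  have g_ne : g ≠ 0 := by
    rintro rfl
    rw [zero_mul] at hgb
    exact not_isCoprime_zero_zero hgb
  have g_dvd : g ∣ g * b := dvd_mul_right g b
  have h_dvd : h ∣ g * b := heq ▸ dvd_mul_right h c
  have hgh : Associated g h := associated_of_dvd_dvd
    (dvd_of_dvd_of_norm_eq hgb h_dvd g_dvd hnorm.symm) (dvd_of_dvd_of_norm_eq hgb g_dvd h_dvd hnorm)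
  have hassoc : Associated (g * b) (h * c) := by rw [heq]
  exact ⟨hgh, hassoc.of_mul_left hgh g_ne⟩

lemma associated_star_of_norm_eq {d : ℤ} {a b : ℤ√d} (hab : IsCoprime a b)
    (hnorm : a.norm = b.norm) (hb : b.norm ≠ 0) : Associated a (star b) := by
  refine associated_of_dvd_of_norm_eq (hab.dvd_of_dvd_mul_left ?_) ?_ ?_
  · rw [← Zsqrtd.norm_eq_mul_conj, ← hnorm, Zsqrtd.norm_eq_mul_conj]
    exact dvd_mul_right a _
  · rw [Zsqrtd.norm_conj, hnorm]
  · rwa [Zsqrtd.norm_conj]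

lemma card_gaussianInt_le_of_forall_associated {w : GaussianInt} {s : Finset GaussianInt}
    (hs : ∀ z ∈ s, Associated w z) : #s ≤ 9 := by
  have hsub : s ⊆ (Icc (-1 : ℤ) 1 ×ˢ Icc (-1 : ℤ) 1).image fun u => w * ⟨u.1, u.2⟩ := by
    intro z hz
    obtain ⟨u, rfl⟩ := hs z hz
    have hu : u.val.re * u.val.re - -1 * u.val.im * u.val.im = 1 := by
      rw [← Zsqrtd.norm_def, Zsqrtd.norm_eq_one_iff' (by norm_num)]
      exact u.isUnit
    refine mem_image.2 ⟨(u.val.re, u.val.im), ?_, rfl⟩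
    simp only [mem_product, mem_Icc]
    refine ⟨⟨?_, ?_⟩, ?_, ?_⟩ <;>
      nlinarith [mul_self_nonneg u.val.re, mul_self_nonneg u.val.im]
  calc #s ≤ _ := card_le_card hsub
    _ ≤ #(Icc (-1 : ℤ) 1 ×ˢ Icc (-1 : ℤ) 1) := card_image_le
    _ = 9 := rfl

/- If `z₀ = g * b` and `z = g * a` with `a`, `b` coprime, then equality of norms forces
`z = g * star b` up to a unit, and `g` is determined up to a unit by its norm. -/
lemma card_gaussianInt_le_of_norm_eq_of_isCoprime {n : ℕ} (hn : n ≠ 0) {z₀ : GaussianInt}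
    (hz₀ : z₀.norm = n) (hcop : IsCoprime z₀.re z₀.im) {s : Finset GaussianInt}
    (hs : ∀ z ∈ s, z.norm = n) : #s ≤ 9 * #n.divisors := by
  have norm_ne : z₀.norm ≠ 0 := by rw [hz₀]; exact_mod_cast hn
  have z₀_ne : z₀ ≠ 0 := fun h => norm_ne (by rw [h, Zsqrtd.norm_zero])
  choose b a g hba hb ha using
    fun z => UniqueFactorizationMonoid.exists_reduced_factors z₀ z₀_ne z
  refine card_le_mul_card_image_of_maps_to (f := fun z => (g z).norm.natAbs) (fun z _ => ?_) 9
    fun d _ => ?_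
  · refine Nat.mem_divisors.2 ⟨?_, hn⟩
    rw [← Int.natCast_dvd_natCast, Int.natCast_natAbs, abs_dvd, ← hz₀, ← hb z, Zsqrtd.norm_mul]
    exact dvd_mul_right _ _
  obtain hempty | ⟨w, hw⟩ := {z ∈ s | (g z).norm.natAbs = d}.eq_empty_or_nonempty
  · rw [hempty]; exact Nat.zero_le 9
  have assoc_star {z : GaussianInt} (hz : z ∈ s) : Associated z (g z * star (b z)) := by
    have norm_eq : (g z).norm * (a z).norm = (g z).norm * (b z).norm := by
      rw [← Zsqrtd.norm_mul, ← Zsqrtd.norm_mul, ha, hb, hs z hz, hz₀]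
    rw [← hb z, Zsqrtd.norm_mul, mul_ne_zero_iff] at norm_ne
    have key := associated_star_of_norm_eq (hba z).symm.isCoprime
      (mul_left_cancel₀ norm_ne.1 norm_eq) norm_ne.2
    simpa only [ha] using key.mul_left (g z)
  refine card_gaussianInt_le_of_forall_associated (w := w) fun z hz => ?_
  obtain ⟨⟨hw, hwd⟩, hz, hzd⟩ := And.intro (mem_filter.1 hw) (mem_filter.1 hz)
  have hnorm : (g w).norm = (g z).norm := by
    rw [← Int.natAbs_of_nonneg (GaussianInt.norm_nonneg (g w)), hwd, ← hzd,
      Int.natAbs_of_nonneg (GaussianInt.norm_nonneg (g z))]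
  obtain ⟨assoc_g, assoc_b⟩ := associated_of_mul_eq_mul_of_norm_eq (by rwa [hb w])
    ((hb w).trans (hb z).symm) hnorm
  exact (assoc_star hw).trans <|
    (assoc_g.mul_mul (assoc_b.map (starRingEnd GaussianInt))).trans (assoc_star hz).symm

lemma card_gaussianInt_le_of_norm_eq_of_gcd_eq {n : ℕ} (hn : n ≠ 0) {d : ℕ} {s : Finset GaussianInt}
    (hs : ∀ z ∈ s, z.norm = n) (hd : ∀ z ∈ s, Int.gcd z.re z.im = d) :
    #s ≤ 9 * #n.divisors := by
  obtain rfl | ⟨w, hw⟩ := s.eq_empty_or_nonempty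
  · exact Nat.zero_le _
  have exists_primitive (z : GaussianInt) (hz : z ∈ s) :
      ∃ b : GaussianInt, z = ((d : ℤ) : GaussianInt) * b ∧ IsCoprime b.re b.im := by
    have gcd_pos : 0 < Int.gcd z.re z.im := by
      refine Nat.pos_of_ne_zero fun h => hn ?_
      obtain ⟨hre, him⟩ := Int.gcd_eq_zero_iff.1 h
      have hnorm : (n : ℤ) = 0 := by rw [← hs z hz, Zsqrtd.norm_def, hre, him]; rfl
      exact_mod_cast hnorm
    simpa only [hd z hz] using Zsqrtd.exists_coprime_of_gcd_pos gcd_pos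
  choose! b hb hcop using exists_primitive
  have norm_b {z : GaussianInt} (hz : z ∈ s) : (d : ℤ) ^ 2 * (b z).norm = n := by
    rw [← hs z hz]
    conv_rhs => rw [hb z hz, Zsqrtd.norm_mul, Zsqrtd.norm_intCast, ← sq]
  have d_ne : (d : ℤ) ^ 2 ≠ 0 := left_ne_zero_of_mul ((norm_b hw).trans_ne (by exact_mod_cast hn))
  obtain ⟨k, hk⟩ := Int.eq_ofNat_of_zero_le (GaussianInt.norm_nonneg (b w))
  have k_dvd : k ∣ n := by
    rw [← Int.natCast_dvd_natCast, ← norm_b hw, hk]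
    exact dvd_mul_left _ _
  have inj : Set.InjOn b s := fun x hx y hy h => by rw [hb x hx, hb y hy, h]
  calc #s = #(s.image b) := (card_image_of_injOn inj).symm
    _ ≤ 9 * #k.divisors :=
        card_gaussianInt_le_of_norm_eq_of_isCoprime (ne_zero_of_dvd_ne_zero hn k_dvd) hk (hcop w hw)
          (forall_mem_image.2 fun z hz =>
            mul_left_cancel₀ d_ne (by rw [norm_b hz, ← hk, norm_b hw]))
    _ ≤ 9 * #n.divisors := by gcongr

lemma card_gaussianInt_le_of_norm_eq {n : ℕ} (hn : n ≠ 0) {s : Finset GaussianInt}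
    (hs : ∀ z ∈ s, z.norm = n) : #s ≤ 9 * #n.divisors ^ 2 := by
  rw [sq, ← mul_assoc]
  refine card_le_mul_card_image_of_maps_to (f := fun z => Int.gcd z.re z.im) (fun z hz => ?_) _
    fun d _ => card_gaussianInt_le_of_norm_eq_of_gcd_eq hn (d := d)
      (fun z hz => hs z (mem_filter.1 hz).1) fun z hz => (mem_filter.1 hz).2
  refine Nat.mem_divisors.2 ⟨?_, hn⟩
  rw [← Int.natCast_dvd_natCast, ← hs z hz, Zsqrtd.norm_def]
  exact dvd_sub ((Int.gcd_dvd_left _ _).mul_right _) ((Int.gcd_dvd_right _ _).mul_left _)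

end GaussianIntegers

section Circle

lemma nsq_pos {v : ℤ × ℤ} (hv : v ≠ 0) : 0 < nsq v := by
  rw [nsq]
  rcases v with ⟨x, y⟩
  obtain hx | hy : x ≠ 0 ∨ y ≠ 0 := by
    simpa only [ne_eq, Prod.mk_eq_zero, not_and_or] using hv
  all_goals positivity

lemma nsq_le_two_mul_norm_sq (v : ℤ × ℤ) : (nsq v : ℝ) ≤ 2 * ‖v‖ ^ 2 := by
  have h₁ : (v.1 : ℝ) ^ 2 ≤ ‖v‖ ^ 2 := by
    rw [← sq_abs, ← Int.norm_eq_abs]; gcongr; exact norm_fst_le v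
  have h₂ : (v.2 : ℝ) ^ 2 ≤ ‖v‖ ^ 2 := by
    rw [← sq_abs, ← Int.norm_eq_abs]; gcongr; exact norm_snd_le v
  rw [nsq]
  push_cast
  linarith

/- The product of the sides of a triangle is four times the circumradius times the area. -/
lemma nsq_mul_nsq_mul_nsq_sub {u a b : ℤ × ℤ} {r : ℤ} (hu : nsq u = r) (ha : nsq (u + a) = r)
    (hb : nsq (u + b) = r) :
    nsq a * nsq b * nsq (b - a) = 4 * r * (a.1 * b.2 - a.2 * b.1) ^ 2 := by
  rcases u with ⟨u₁, u₂⟩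
  rcases a with ⟨a₁, a₂⟩
  rcases b with ⟨b₁, b₂⟩
  simp only [nsq, Prod.mk_add_mk, Prod.mk_sub_mk] at *
  have cramer₁ : 2 * (a₁ * b₂ - a₂ * b₁) * u₁ =
      (b₁ ^ 2 + b₂ ^ 2) * a₂ - (a₁ ^ 2 + a₂ ^ 2) * b₂ := by
    linear_combination b₂ * ha - a₂ * hb + (a₂ - b₂) * hu
  have cramer₂ : 2 * (a₁ * b₂ - a₂ * b₁) * u₂ =
      (a₁ ^ 2 + a₂ ^ 2) * b₁ - (b₁ ^ 2 + b₂ ^ 2) * a₁ := by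
    linear_combination -b₁ * ha + a₁ * hb + (b₁ - a₁) * hu
  rw [← hu]
  linear_combination (-2 * (a₁ * b₂ - a₂ * b₁) * u₁ -
      ((b₁ ^ 2 + b₂ ^ 2) * a₂ - (a₁ ^ 2 + a₂ ^ 2) * b₂)) * cramer₁ +
    (-2 * (a₁ * b₂ - a₂ * b₁) * u₂ -
      ((a₁ ^ 2 + a₂ ^ 2) * b₁ - (b₁ ^ 2 + b₂ ^ 2) * a₁)) * cramer₂

lemma pos_and_le_of_nsq_eq_of_two_lt_card {s : Finset (ℤ × ℤ)} {r : ℤ} {L : ℝ}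
    (hs : ∀ u ∈ s, nsq u = r) (hL : ∀ u ∈ s, ∀ v ∈ s, ‖u - v‖ ≤ L) (hcard : 2 < #s) :
    0 < r ∧ (r : ℝ) ≤ 8 * L ^ 6 := by
  obtain ⟨u, hu, v, hv, w, hw, huv, huw, hvw⟩ := two_lt_card.1 hcard
  have sides := nsq_mul_nsq_mul_nsq_sub (a := v - u) (b := w - u) (hs u hu)
    (by rw [add_sub_cancel, hs v hv]) (by rw [add_sub_cancel, hs w hw])
  rw [sub_sub_sub_cancel_right] at sides
  set D := (v - u).1 * (w - u).2 - (v - u).2 * (w - u).1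
  have sides_pos : 0 < 4 * r * D ^ 2 := by
    rw [← sides]
    exact mul_pos (mul_pos (nsq_pos (sub_ne_zero.2 huv.symm)) (nsq_pos (sub_ne_zero.2 huw.symm)))
      (nsq_pos (sub_ne_zero.2 hvw.symm))
  have r_pos : 0 < r := by
    have := pos_of_mul_pos_left sides_pos (sq_nonneg D)
    lia
  have D_pos : 0 < D ^ 2 := pos_of_mul_pos_right sides_pos (by positivity)
  have side_le {x y : ℤ × ℤ} (hx : x ∈ s) (hy : y ∈ s) : (nsq (x - y) : ℝ) ≤ 2 * L ^ 2 :=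
    (nsq_le_two_mul_norm_sq _).trans (by gcongr; exact hL x hx y hy)
  have side_nonneg (x : ℤ × ℤ) : (0 : ℝ) ≤ nsq x := by exact_mod_cast (by rw [nsq]; positivity)
  refine ⟨r_pos, ?_⟩
  calc (r : ℝ) ≤ ((4 * r * D ^ 2 : ℤ) : ℝ) := by exact_mod_cast (by nlinarith)
    _ = nsq (v - u) * nsq (w - u) * nsq (w - v) := by rw [← sides]; push_cast; rfl
    _ ≤ 2 * L ^ 2 * (2 * L ^ 2) * (2 * L ^ 2) := by
        gcongr
        exacts [side_nonneg _, side_nonneg _, side_le hv hu, side_le hw hu, side_le hw hv]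
    _ = 8 * L ^ 6 := by ring

lemma card_le_of_nsq_eq {n : ℕ} (hn : n ≠ 0) {s : Finset (ℤ × ℤ)} (hs : ∀ u ∈ s, nsq u = n) :
    #s ≤ 9 * #n.divisors ^ 2 := by
  have inj : Function.Injective fun u : ℤ × ℤ => (⟨u.1, u.2⟩ : GaussianInt) := fun u v h =>
    Prod.ext (congrArg Zsqrtd.re h) (congrArg Zsqrtd.im h)
  rw [← card_image_of_injective s inj]
  refine card_gaussianInt_le_of_norm_eq hn (forall_mem_image.2 fun u hu => ?_)
  rw [← hs u hu, Zsqrtd.norm_def, nsq]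
  ring

/- Two points are harmless, and three points at distance at most `L` apart bound the radius of the
circle by a power of `L`. -/
theorem exists_card_le_mul_rpow_of_nsq_eq {ε : ℝ} (hε : 0 < ε) :
    ∃ C : ℝ, 1 ≤ C ∧ ∀ (r : ℤ) (L : ℝ) (s : Finset (ℤ × ℤ)), 1 ≤ L → (∀ u ∈ s, nsq u = r) →
      (∀ u ∈ s, ∀ v ∈ s, ‖u - v‖ ≤ L) → (#s : ℝ) ≤ C * L ^ ε := by
  obtain ⟨C, hC, hdiv⟩ := exists_card_divisors_le_mul_rpow (ε := ε / 12) (by positivity)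
  have L_rpow {L : ℝ} (hL : 1 ≤ L) : ((8 * L ^ 6) ^ (ε / 12)) ^ 2 = 8 ^ (ε / 6) * L ^ ε := by
    rw [← Real.rpow_mul_natCast (by positivity), Real.mul_rpow (by positivity) (by positivity),
      ← Real.rpow_natCast_mul (by positivity)]
    congr 2 <;> push_cast <;> ring
  have one_le_const : 1 ≤ C ^ 2 * 8 ^ (ε / 6) :=
    one_le_mul_of_one_le_of_one_le (one_le_pow₀ hC) (Real.one_le_rpow (by norm_num) (by positivity))
  refine ⟨9 * (C ^ 2 * 8 ^ (ε / 6)), by linarith, fun r L s hL hs hdiam => ?_⟩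
  obtain hcard | hcard := le_or_gt #s 2
  · calc (#s : ℝ) ≤ 9 * 1 * 1 := by norm_num; exact_mod_cast hcard.trans (by norm_num)
      _ ≤ 9 * (C ^ 2 * 8 ^ (ε / 6)) * L ^ ε := by
          gcongr
          exact Real.one_le_rpow hL hε.le
  obtain ⟨r_pos, hr⟩ := pos_and_le_of_nsq_eq_of_two_lt_card hs hdiam hcard
  lift r to ℕ using r_pos.le
  calc (#s : ℝ) ≤ 9 * #r.divisors ^ 2 := by
        exact_mod_cast card_le_of_nsq_eq (by exact_mod_cast r_pos.ne') hs
    _ ≤ 9 * (C * (8 * L ^ 6) ^ (ε / 12)) ^ 2 := by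
        gcongr
        refine (hdiv r).trans ?_
        gcongr
        exact hr
    _ = 9 * (C ^ 2 * 8 ^ (ε / 6)) * L ^ ε := by rw [mul_pow, L_rpow hL]; ring

end Circle

section Diameter

lemma norm_sub_le_two_mul {E : Type*} [SeminormedAddCommGroup E] {u v c : E} {R : ℝ}
    (hu : ‖u + c‖ ≤ R) (hv : ‖v + c‖ ≤ R) : ‖u - v‖ ≤ 2 * R := by
  rw [← add_sub_add_right_eq_sub u v c, two_mul]
  exact norm_sub_le_of_le hu hv

lemma card_le_add_one_of_sub_le {s : Finset ℤ} {L : ℝ} (hL : 0 ≤ L)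
    (hs : ∀ x ∈ s, ∀ y ∈ s, ((x - y : ℤ) : ℝ) ≤ L) : (#s : ℝ) ≤ L + 1 := by
  obtain rfl | hne := s.eq_empty_or_nonempty
  · rw [card_empty, Nat.cast_zero]; positivity
  have hsub : s ⊆ Icc (s.min' hne) (s.min' hne + ⌊L⌋) := fun x hx =>
    mem_Icc.2 ⟨s.min'_le x hx, sub_le_iff_le_add'.1 (Int.le_floor.2 (hs x hx _ (s.min'_mem hne)))⟩
  calc (#s : ℝ) ≤ #(Icc (s.min' hne) (s.min' hne + ⌊L⌋)) := by exact_mod_cast card_le_card hsub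
    _ = (⌊L⌋ + 1 : ℝ) := by
        have := Int.floor_nonneg.2 hL
        rw [Int.card_Icc, ← Int.cast_natCast, Int.toNat_of_nonneg (by lia)]
        push_cast
        ring
    _ ≤ L + 1 := by gcongr; exact Int.floor_le L

lemma card_le_add_one_sq_of_norm_sub_le {s : Finset (ℤ × ℤ)} {L : ℝ} (hL : 0 ≤ L)
    (hs : ∀ x ∈ s, ∀ y ∈ s, ‖x - y‖ ≤ L) : (#s : ℝ) ≤ (L + 1) ^ 2 := by
  have le_fst : (#(s.image Prod.fst) : ℝ) ≤ L + 1 := by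
    refine card_le_add_one_of_sub_le hL ?_
    simp only [forall_mem_image]
    intro x hx y hy
    exact ((le_abs_self _).trans_eq (Int.norm_eq_abs _).symm).trans
      ((norm_fst_le (x - y)).trans (hs x hx y hy))
  have le_snd : (#(s.image Prod.snd) : ℝ) ≤ L + 1 := by
    refine card_le_add_one_of_sub_le hL ?_
    simp only [forall_mem_image]
    intro x hx y hy
    exact ((le_abs_self _).trans_eq (Int.norm_eq_abs _).symm).trans
      ((norm_snd_le (x - y)).trans (hs x hx y hy))
  calc (#s : ℝ) ≤ #(s.image Prod.fst) * #(s.image Prod.snd) := by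
        rw [← Nat.cast_mul, ← card_product]
        exact_mod_cast card_le_card subset_product
    _ ≤ (L + 1) ^ 2 := by rw [sq]; gcongr

lemma card_le_div_add_one_of_sub_eq_zsmul {E : Type*} [NormedAddCommGroup E] [NormSMulClass ℤ E]
    {w : E} (hw : w ≠ 0) {s : Finset E} {L : ℝ} (hL : 0 ≤ L)
    (hs : ∀ x ∈ s, ∀ y ∈ s, ‖x - y‖ ≤ L) (hsw : ∀ x ∈ s, ∀ y ∈ s, ∃ t : ℤ, x - y = t • w) :
    (#s : ℝ) ≤ L / ‖w‖ + 1 := by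
  obtain rfl | ⟨x₀, hx₀⟩ := s.eq_empty_or_nonempty
  · rw [card_empty, Nat.cast_zero]; positivity
  choose! t ht using fun x hx => hsw x hx x₀ hx₀
  have sub_eq {x y : E} (hx : x ∈ s) (hy : y ∈ s) : x - y = (t x - t y) • w := by
    rw [sub_smul, ← ht x hx, ← ht y hy, sub_sub_sub_cancel_right]
  have inj : Set.InjOn t s := fun x hx y hy h => by
    rw [← sub_eq_zero, sub_eq hx hy, h, sub_self, zero_smul]
  rw [← card_image_of_injOn inj]
  refine card_le_add_one_of_sub_le (by positivity) ?_
  simp only [forall_mem_image]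
  intro x hx y hy
  rw [le_div_iff₀ (norm_pos_iff.2 hw)]
  calc ((t x - t y : ℤ) : ℝ) * ‖w‖ ≤ ‖t x - t y‖ * ‖w‖ := by
        gcongr; rw [Int.norm_eq_abs]; exact le_abs_self _
    _ = ‖x - y‖ := by rw [← norm_smul, ← sub_eq hx hy]
    _ ≤ L := hs x hx y hy

end Diameter

section PrimitiveDirections

/-- The Euclidean inner product on `ℤ²`. -/
def zdot (p q : ℤ × ℤ) : ℤ := p.1 * q.1 + p.2 * q.2

lemma zdot_comm (p q : ℤ × ℤ) : zdot p q = zdot q p := by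
  simp only [zdot, mul_comm]

lemma zdot_smul (c : ℤ) (p q : ℤ × ℤ) : zdot (c • p) q = c * zdot p q := by
  simp only [zdot, Prod.smul_fst, Prod.smul_snd, smul_eq_mul]
  ring

lemma zdot_sub (p q r : ℤ × ℤ) : zdot p (q - r) = zdot p q - zdot p r := by
  simp only [zdot, Prod.fst_sub, Prod.snd_sub]
  ring

/-- The primitive lattice vector in the direction of `v`, with the value `0` at `v = 0`. -/
def primPart (v : ℤ × ℤ) : ℤ × ℤ := (v.1 / Int.gcd v.1 v.2, v.2 / Int.gcd v.1 v.2)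

lemma gcd_smul_primPart (v : ℤ × ℤ) : (Int.gcd v.1 v.2 : ℤ) • primPart v = v :=
  Prod.ext (Int.mul_ediv_cancel' (Int.gcd_dvd_left _ _))
    (Int.mul_ediv_cancel' (Int.gcd_dvd_right _ _))

lemma primPart_ne_zero {v : ℤ × ℤ} (hv : v ≠ 0) : primPart v ≠ 0 := fun h =>
  hv (by rw [← gcd_smul_primPart v, h, smul_zero])

lemma isCoprime_primPart {v : ℤ × ℤ} (hv : v ≠ 0) : IsCoprime (primPart v).1 (primPart v).2 := by
  have gcd_pos : 0 < Int.gcd v.1 v.2 := Nat.pos_of_ne_zero fun h =>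
    hv (Prod.ext (Int.gcd_eq_zero_iff.1 h).1 (Int.gcd_eq_zero_iff.1 h).2)
  exact Int.isCoprime_iff_gcd_eq_one.2 (Int.gcd_div_gcd_div_gcd gcd_pos)

lemma exists_eq_zsmul_of_zdot_eq_zero {p x : ℤ × ℤ} (hp : p ≠ 0) (h : zdot p x = 0) :
    ∃ t : ℤ, x = t • (-(primPart p).2, (primPart p).1) := by
  obtain ⟨a, b, hab⟩ := isCoprime_primPart hp
  have h' : zdot (primPart p) x = 0 := by
    rw [← gcd_smul_primPart p, zdot_smul] at h
    refine (mul_eq_zero.1 h).resolve_left fun hg => hp ?_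
    rw [← gcd_smul_primPart p, hg, zero_smul]
  rw [zdot] at h'
  refine ⟨a * x.2 - b * x.1, Prod.ext ?_ ?_⟩
  · change x.1 = (a * x.2 - b * x.1) * -(primPart p).2
    linear_combination a * h' - x.1 * hab
  · change x.2 = (a * x.2 - b * x.1) * (primPart p).1
    linear_combination b * h' - x.2 * hab

lemma card_le_of_zdot_eq {p : ℤ × ℤ} (hp : p ≠ 0) {k : ℤ} {s : Finset (ℤ × ℤ)} {L : ℝ}
    (hL : 0 ≤ L) (hs : ∀ x ∈ s, ∀ y ∈ s, ‖x - y‖ ≤ L) (hk : ∀ x ∈ s, zdot p x = k) :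
    (#s : ℝ) ≤ L / ‖primPart p‖ + 1 := by
  have norm_rot : ‖((-(primPart p).2, (primPart p).1) : ℤ × ℤ)‖ = ‖primPart p‖ := by
    rw [Prod.norm_mk, norm_neg, max_comm, Prod.norm_def]
  rw [← norm_rot]
  refine card_le_div_add_one_of_sub_eq_zsmul ?_ hL hs fun x hx y hy =>
    exists_eq_zsmul_of_zdot_eq_zero hp (by rw [zdot_sub, hk x hx, hk y hy, sub_self])
  rw [← norm_ne_zero_iff, norm_rot, norm_ne_zero_iff]
  exact primPart_ne_zero hp

lemma card_filter_primPart_eq_le {w : ℤ × ℤ} (hw : w ≠ 0) {s : Finset (ℤ × ℤ)} {L : ℝ}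
    (hL : 0 ≤ L) (hs : ∀ x ∈ s, ∀ y ∈ s, ‖x - y‖ ≤ L) :
    (#{p ∈ s | primPart p = w} : ℝ) ≤ L / ‖w‖ + 1 := by
  refine card_le_div_add_one_of_sub_eq_zsmul hw hL
    (fun x hx y hy => hs x (mem_filter.1 hx).1 y (mem_filter.1 hy).1) fun x hx y hy => ?_
  refine ⟨Int.gcd x.1 x.2 - Int.gcd y.1 y.2, ?_⟩
  conv_lhs => rw [← gcd_smul_primPart x, ← gcd_smul_primPart y, (mem_filter.1 hx).2,
    (mem_filter.1 hy).2, ← sub_smul]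

lemma mem_box_iff_norm_eq {v : ℤ × ℤ} {K : ℕ} : v ∈ box K ↔ ‖v‖ = K := by
  rw [Int.mem_box, Prod.norm_def, ← Nat.cast_inj (R := ℝ), Nat.cast_max, Int.norm_eq_abs,
    Int.norm_eq_abs, Nat.cast_natAbs, Nat.cast_natAbs, Int.cast_abs, Int.cast_abs]

lemma card_filter_norm_primPart_eq_le {s : Finset (ℤ × ℤ)} {L : ℝ}
    (hs : ∀ x ∈ s, ∀ y ∈ s, ‖x - y‖ ≤ L) {K : ℕ} (hK : K ≠ 0) (hKL : K ≤ L) :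
    (#{p ∈ s | ‖primPart p‖ = K} : ℝ) ≤ 16 * L := by
  have K_pos : (0 : ℝ) < K := by positivity
  have fiber_le (w : ℤ × ℤ) (hw : w ∈ box K) :
      (#{p ∈ {p ∈ s | ‖primPart p‖ = K} | primPart p = w} : ℝ) ≤ L / K + 1 := by
    have norm_w := mem_box_iff_norm_eq.1 hw
    rw [← norm_w]
    refine card_filter_primPart_eq_le (norm_pos_iff.1 (norm_w ▸ K_pos)) (K_pos.le.trans hKL)
      fun x hx y hy => hs x (mem_filter.1 hx).1 y (mem_filter.1 hy).1
  calc (#{p ∈ s | ‖primPart p‖ = K} : ℝ)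
      = ∑ w ∈ box K, (#{p ∈ {p ∈ s | ‖primPart p‖ = K} | primPart p = w} : ℝ) := by
        rw [← Nat.cast_sum, ← card_eq_sum_card_fiberwise]
        exact fun p hp => mem_box_iff_norm_eq.2 (mem_filter.1 hp).2
    _ ≤ #(box K : Finset (ℤ × ℤ)) • (L / K + 1) := sum_le_card_nsmul _ _ _ fiber_le
    _ = 8 * (L + K) := by
        rw [Int.card_box hK, nsmul_eq_mul, Nat.cast_mul, Nat.cast_ofNat]
        field_simp
    _ ≤ 16 * L := by linarith

lemma sum_inv_norm_primPart_le_of_norm_primPart_le {s : Finset (ℤ × ℤ)} {L : ℝ} (hL : 1 ≤ L)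
    (hs : ∀ x ∈ s, ∀ y ∈ s, ‖x - y‖ ≤ L) (hs0 : ∀ p ∈ s, p ≠ 0)
    (hsL : ∀ p ∈ s, ‖primPart p‖ ≤ L) :
    ∑ p ∈ s, ‖primPart p‖⁻¹ ≤ 16 * L * (1 + Real.log L) := by
  choose K hK using fun p => (Int.existsUnique_mem_box (primPart p)).exists
  have norm_eq (p : ℤ × ℤ) : ‖primPart p‖ = K p := mem_box_iff_norm_eq.1 (hK p)
  have maps (p : ℤ × ℤ) (hp : p ∈ s) : K p ∈ Icc 1 ⌊L⌋₊ := by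
    have hpos := norm_pos_iff.2 (primPart_ne_zero (hs0 p hp))
    rw [norm_eq] at hpos
    exact mem_Icc.2 ⟨by exact_mod_cast hpos, Nat.le_floor (norm_eq p ▸ hsL p hp)⟩
  calc ∑ p ∈ s, ‖primPart p‖⁻¹
      = ∑ k ∈ Icc 1 ⌊L⌋₊, (#{p ∈ s | ‖primPart p‖ = k} : ℝ) * (k : ℝ)⁻¹ := by
        rw [← sum_fiberwise_of_maps_to maps]
        refine sum_congr rfl fun k _ => ?_
        simp only [norm_eq, Nat.cast_inj]
        rw [sum_congr rfl fun p hp => by rw [(mem_filter.1 hp).2], sum_const, nsmul_eq_mul]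
    _ ≤ ∑ k ∈ Icc 1 ⌊L⌋₊, 16 * L * (k : ℝ)⁻¹ := by
        gcongr with k hk
        obtain ⟨one_le, le_floor⟩ := mem_Icc.1 hk
        exact card_filter_norm_primPart_eq_le hs (by lia)
          ((Nat.le_floor_iff (by positivity)).1 le_floor)
    _ = 16 * L * harmonic ⌊L⌋₊ := by
        rw [← mul_sum, harmonic_eq_sum_Icc]
        push_cast
        rfl
    _ ≤ 16 * L * (1 + Real.log L) := by
        gcongr
        exact harmonic_floor_le_one_add_log L hL

lemma sum_inv_norm_primPart_le {s : Finset (ℤ × ℤ)} {L : ℝ} (hL : 1 ≤ L)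
    (hs : ∀ x ∈ s, ∀ y ∈ s, ‖x - y‖ ≤ L) (hs0 : ∀ p ∈ s, p ≠ 0) :
    ∑ p ∈ s, ‖primPart p‖⁻¹ ≤ 20 * L * (1 + Real.log L) := by
  have short : ∑ p ∈ s with ‖primPart p‖ ≤ L, ‖primPart p‖⁻¹ ≤ 16 * L * (1 + Real.log L) :=
    sum_inv_norm_primPart_le_of_norm_primPart_le hL
      (fun x hx y hy => hs x (mem_filter.1 hx).1 y (mem_filter.1 hy).1)
      (fun p hp => hs0 p (mem_filter.1 hp).1) fun p hp => (mem_filter.1 hp).2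
  have long : ∑ p ∈ s with ¬‖primPart p‖ ≤ L, ‖primPart p‖⁻¹ ≤ 4 * L :=
    calc ∑ p ∈ s with ¬‖primPart p‖ ≤ L, ‖primPart p‖⁻¹
        ≤ #{p ∈ s | ¬‖primPart p‖ ≤ L} • L⁻¹ := by
          refine sum_le_card_nsmul _ _ _ fun p hp => ?_
          gcongr
          exact (not_le.1 (mem_filter.1 hp).2).le
      _ ≤ (L + L) ^ 2 * L⁻¹ := by
          rw [nsmul_eq_mul]
          gcongr
          refine (card_le_add_one_sq_of_norm_sub_le (by positivity) fun x hx y hy =>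
            hs x (mem_filter.1 hx).1 y (mem_filter.1 hy).1).trans ?_
          gcongr
      _ = 4 * L := by field_simp; norm_num
  rw [← sum_filter_add_sum_filter_not s (‖primPart ·‖ ≤ L)]
  have := mul_nonneg (zero_le_one.trans hL) (Real.log_nonneg hL)
  linarith

end PrimitiveDirections

section Pairs

variable {s : Finset ((ℤ × ℤ) × (ℤ × ℤ))} {k : ℤ} {L M : ℝ}

lemma card_le_of_zdot_eq_of_fst_eq {p : ℤ × ℤ} (hp : p ≠ 0) (hM : 0 ≤ M)
    (hk : ∀ x ∈ s, zdot x.1 x.2 = k) (hfst : ∀ x ∈ s, x.1 = p)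
    (hsnd : ∀ x ∈ s, ∀ y ∈ s, ‖x.2 - y.2‖ ≤ M) : (#s : ℝ) ≤ M / ‖primPart p‖ + 1 := by
  have inj : Set.InjOn Prod.snd (s : Set ((ℤ × ℤ) × (ℤ × ℤ))) :=
    fun x hx y hy h => Prod.ext ((hfst x hx).trans (hfst y hy).symm) h
  rw [← card_image_of_injOn inj]
  refine card_le_of_zdot_eq (k := k) hp hM ?_ ?_ <;> simp only [forall_mem_image]
  · exact hsnd
  · exact fun x hx => hfst x hx ▸ hk x hx

lemma card_le_of_zdot_fst_snd_eq (hL : 1 ≤ L) (hLM : L ≤ M) (hs0 : ∀ x ∈ s, x.1 ≠ 0)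
    (hk : ∀ x ∈ s, zdot x.1 x.2 = k) (hfst : ∀ x ∈ s, ∀ y ∈ s, ‖x.1 - y.1‖ ≤ L)
    (hsnd : ∀ x ∈ s, ∀ y ∈ s, x.1 = y.1 → ‖x.2 - y.2‖ ≤ M) :
    (#s : ℝ) ≤ 24 * (L * M) * (1 + Real.log L) := by
  have M_pos : 0 < M := by linarith
  have diam_image : ∀ p ∈ s.image Prod.fst, ∀ p' ∈ s.image Prod.fst, ‖p - p'‖ ≤ L := by
    simpa only [forall_mem_image] using hfst
  have image_ne : ∀ p ∈ s.image Prod.fst, p ≠ 0 := by simpa only [forall_mem_image] using hs0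
  have fiber_le (p : ℤ × ℤ) (hp : p ∈ s.image Prod.fst) :
      (#{x ∈ s | x.1 = p} : ℝ) ≤ M * ‖primPart p‖⁻¹ + 1 := by
    refine card_le_of_zdot_eq_of_fst_eq (image_ne p hp) M_pos.le
      (fun x hx => hk x (mem_filter.1 hx).1) (fun x hx => (mem_filter.1 hx).2)
      fun x hx y hy => ?_
    rw [mem_filter] at hx hy
    exact hsnd x hx.1 y hy.1 (hx.2.trans hy.2.symm)
  calc (#s : ℝ) = ∑ p ∈ s.image Prod.fst, (#{x ∈ s | x.1 = p} : ℝ) := by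
        rw [← Nat.cast_sum, ← card_eq_sum_card_image]
    _ ≤ ∑ p ∈ s.image Prod.fst, (M * ‖primPart p‖⁻¹ + 1) := sum_le_sum fiber_le
    _ = M * ∑ p ∈ s.image Prod.fst, ‖primPart p‖⁻¹ + #(s.image Prod.fst) := by
        rw [sum_add_distrib, ← mul_sum, card_eq_sum_ones, Nat.cast_sum, Nat.cast_one]
    _ ≤ M * (20 * L * (1 + Real.log L)) + (L + L) * (M + M) := by
        gcongr
        · exact sum_inv_norm_primPart_le hL diam_image image_ne
        · refine (card_le_add_one_sq_of_norm_sub_le (by positivity) diam_image).trans ?_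
          rw [sq]
          gcongr
          linarith
    _ ≤ 24 * (L * M) * (1 + Real.log L) := by
        have : 0 ≤ L * M * Real.log L := by
          have := Real.log_nonneg hL
          positivity
        linarith

lemma card_le_rpow_of_zdot_fst_snd_eq {ε : ℝ} (hε : 0 < ε) (hL : 1 ≤ L) (hLM : L ≤ M)
    (hs0 : ∀ x ∈ s, x.1 ≠ 0) (hk : ∀ x ∈ s, zdot x.1 x.2 = k)
    (hfst : ∀ x ∈ s, ∀ y ∈ s, ‖x.1 - y.1‖ ≤ L)
    (hsnd : ∀ x ∈ s, ∀ y ∈ s, x.1 = y.1 → ‖x.2 - y.2‖ ≤ M) :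
    (#s : ℝ) ≤ 24 * (1 + 1 / ε) * (L * M) ^ (1 + ε) := by
  have L_pos : 0 < L := zero_lt_one.trans_le hL
  have le_LM : L ≤ L * M := le_mul_of_one_le_right L_pos.le (hL.trans hLM)
  have LM_pos : 0 < L * M := L_pos.trans_le le_LM
  have log_le : 1 + Real.log L ≤ (1 + 1 / ε) * (L * M) ^ ε :=
    calc 1 + Real.log L ≤ L ^ ε + L ^ ε / ε := by
          gcongr
          · exact Real.one_le_rpow hL hε.le
          · exact Real.log_le_rpow_div L_pos.le hε
      _ = (1 + 1 / ε) * L ^ ε := by ring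
      _ ≤ (1 + 1 / ε) * (L * M) ^ ε := by gcongr
  calc (#s : ℝ) ≤ 24 * (L * M) * (1 + Real.log L) :=
        card_le_of_zdot_fst_snd_eq hL hLM hs0 hk hfst hsnd
    _ ≤ 24 * (L * M) * ((1 + 1 / ε) * (L * M) ^ ε) := by gcongr
    _ = 24 * (1 + 1 / ε) * (L * M) ^ (1 + ε) := by
        rw [Real.rpow_add LM_pos, Real.rpow_one]; ring

end Pairs

/-- The pairs `x = (n₁ - n₂, n₃ - n₂)` counted in the column of the tensor indexed by `c = n₂`, for
which `m = φ(n̄)` becomes `zdot x.1 x.2 = k` with `m = 2 * k`. The localisations are weakened to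
bounds in the sup norm of `ℤ²`, without lower bounds. -/
structure IsResonantPair (N N₁ N₃ : ℝ) (c : ℤ × ℤ) (k : ℤ) (x : (ℤ × ℤ) × (ℤ × ℤ)) : Prop where
  fst_ne_zero : x.1 ≠ 0
  snd_ne_zero : x.2 ≠ 0
  zdot_eq : zdot x.1 x.2 = k
  norm_add_add_le : ‖x.1 + x.2 + c‖ ≤ N
  norm_fst_add_le : ‖x.1 + c‖ ≤ N₁
  norm_snd_add_le : ‖x.2 + c‖ ≤ N₃

lemma le_mul_sq_min {X C a b : ℝ} (ha : X ≤ C * a ^ 2) (hb : X ≤ C * b ^ 2) :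
    X ≤ C * min a b ^ 2 := by
  obtain h | h := min_choice a b <;> rwa [h]

namespace IsResonantPair

variable {N N₁ N₃ : ℝ} {c : ℤ × ℤ} {k : ℤ} {x y : (ℤ × ℤ) × (ℤ × ℤ)}

lemma swap (h : IsResonantPair N N₁ N₃ c k x) : IsResonantPair N N₃ N₁ c k x.swap where
  fst_ne_zero := h.snd_ne_zero
  snd_ne_zero := h.fst_ne_zero
  zdot_eq := zdot_comm x.2 x.1 ▸ h.zdot_eq
  norm_add_add_le := add_comm x.2 x.1 ▸ h.norm_add_add_le
  norm_fst_add_le := h.norm_snd_add_le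
  norm_snd_add_le := h.norm_fst_add_le

lemma nsq_fst_sub_snd (h : IsResonantPair N N₁ N₃ c k x) :
    nsq (x.1 - x.2) = nsq (x.1 + x.2) - 4 * k := by
  rw [← h.zdot_eq]
  simp only [nsq, zdot, Prod.fst_sub, Prod.snd_sub, Prod.fst_add, Prod.snd_add]
  ring

lemma norm_fst_sub_fst_le (hx : IsResonantPair N N₁ N₃ c k x) (hy : IsResonantPair N N₁ N₃ c k y) :
    ‖x.1 - y.1‖ ≤ 2 * N₁ :=
  norm_sub_le_two_mul hx.norm_fst_add_le hy.norm_fst_add_le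

lemma norm_snd_sub_snd_le (hx : IsResonantPair N N₁ N₃ c k x) (hy : IsResonantPair N N₁ N₃ c k y) :
    ‖x.2 - y.2‖ ≤ 2 * N₃ :=
  norm_sub_le_two_mul hx.norm_snd_add_le hy.norm_snd_add_le

lemma norm_add_sub_add_le (hx : IsResonantPair N N₁ N₃ c k x) (hy : IsResonantPair N N₁ N₃ c k y) :
    ‖(x.1 + x.2) - (y.1 + y.2)‖ ≤ 2 * N :=
  norm_sub_le_two_mul hx.norm_add_add_le hy.norm_add_add_le

variable {s : Finset ((ℤ × ℤ) × (ℤ × ℤ))} {ε : ℝ}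

/- Once `p + q` is fixed, `p - q` lies on a circle, on which it moves by at most `4 * N₁`. -/
lemma exists_card_le_rpow_of_fst_add_snd_eq (hε : 0 < ε) :
    ∃ C : ℝ, 1 ≤ C ∧ ∀ (N N₁ N₃ : ℝ) (c : ℤ × ℤ) (k : ℤ) (t : ℤ × ℤ)
      (s : Finset ((ℤ × ℤ) × (ℤ × ℤ))), 1 ≤ N₁ → (∀ x ∈ s, IsResonantPair N N₁ N₃ c k x) →
        (∀ x ∈ s, x.1 + x.2 = t) → (#s : ℝ) ≤ C * N₁ ^ ε := by
  obtain ⟨C, hC, hcircle⟩ := exists_card_le_mul_rpow_of_nsq_eq hε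
  refine ⟨C * 4 ^ ε,
    one_le_mul_of_one_le_of_one_le hC (Real.one_le_rpow (by norm_num) hε.le),
    fun N N₁ N₃ c k t s hN₁ hs hst => ?_⟩
  have inj : Set.InjOn (fun x => x.1 - x.2) (s : Set ((ℤ × ℤ) × (ℤ × ℤ))) := by
    intro x hx y hy hxy
    have hsum := (hst x hx).trans (hst y hy).symm
    simp only [Prod.ext_iff, Prod.fst_add, Prod.snd_add, Prod.fst_sub, Prod.snd_sub] at hxy hsum ⊢
    lia
  rw [← card_image_of_injOn inj, mul_assoc, ← Real.mul_rpow (by norm_num) (by positivity)]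
  refine hcircle (nsq t - 4 * k) _ _ (by linarith) ?_ ?_ <;> simp only [forall_mem_image]
  · intro x hx
    rw [(hs x hx).nsq_fst_sub_snd, hst x hx]
  · intro x hx y hy
    have hsum := (hst x hx).trans (hst y hy).symm
    calc ‖(x.1 - x.2) - (y.1 - y.2)‖ = ‖(2 : ℤ) • (x.1 - y.1)‖ := by
          congr 1
          linear_combination (exp := 1) -hsum
      _ = 2 * ‖x.1 - y.1‖ := by rw [norm_smul, Int.norm_eq_abs]; norm_num
      _ ≤ 2 * (2 * N₁) := by gcongr; exact norm_fst_sub_fst_le (hs x hx) (hs y hy)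
      _ = 4 * N₁ := by ring

lemma exists_card_le_sq_mul_rpow (hε : 0 < ε) :
    ∃ C : ℝ, 1 ≤ C ∧ ∀ (N N₁ N₃ : ℝ) (c : ℤ × ℤ) (k : ℤ) (s : Finset ((ℤ × ℤ) × (ℤ × ℤ))),
      1 ≤ N → 1 ≤ N₁ → (∀ x ∈ s, IsResonantPair N N₁ N₃ c k x) →
        (#s : ℝ) ≤ C * (N ^ 2 * N₁ ^ ε) := by
  obtain ⟨C, hC, hfiber⟩ := exists_card_le_rpow_of_fst_add_snd_eq hε
  refine ⟨9 * C, by linarith, fun N N₁ N₃ c k s hN hN₁ hs => ?_⟩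
  have card_image_le : (#(s.image fun x => x.1 + x.2) : ℝ) ≤ (2 * N + N) ^ 2 := by
    refine (card_le_add_one_sq_of_norm_sub_le (L := 2 * N) (by positivity) ?_).trans (by gcongr)
    simp only [forall_mem_image]
    exact fun x hx y hy => norm_add_sub_add_le (hs x hx) (hs y hy)
  calc (#s : ℝ) = ∑ t ∈ s.image fun x => x.1 + x.2, (#{x ∈ s | x.1 + x.2 = t} : ℝ) := by
        rw [← Nat.cast_sum, ← card_eq_sum_card_image]
    _ ≤ #(s.image fun x => x.1 + x.2) • (C * N₁ ^ ε) :=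
        sum_le_card_nsmul _ _ _ fun t _ => hfiber N N₁ N₃ c k t _ hN₁
          (fun x hx => hs x (mem_filter.1 hx).1) fun x hx => (mem_filter.1 hx).2
    _ ≤ (2 * N + N) ^ 2 * (C * N₁ ^ ε) := by rw [nsmul_eq_mul]; gcongr
    _ = 9 * C * (N ^ 2 * N₁ ^ ε) := by ring

lemma card_le_rpow_of_N₁_le_N (hε : 0 < ε) (hN₁ : 1 ≤ N₁) (hN : N₁ ≤ N)
    (hs : ∀ x ∈ s, IsResonantPair N N₁ N₃ c k x) :
    (#s : ℝ) ≤ 24 * (1 + 1 / ε) * (2 * N₁ * (2 * N)) ^ (1 + ε) := by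
  refine card_le_rpow_of_zdot_fst_snd_eq hε (by linarith) (by gcongr)
    (fun x hx => (hs x hx).fst_ne_zero) (fun x hx => (hs x hx).zdot_eq)
    (fun x hx y hy => norm_fst_sub_fst_le (hs x hx) (hs y hy)) fun x hx y hy hxy => ?_
  have := norm_add_sub_add_le (hs x hx) (hs y hy)
  rwa [hxy, add_sub_add_left_eq_sub] at this

lemma card_le_rpow_of_N₁_le_N₃ (hε : 0 < ε) (hN₁ : 1 ≤ N₁) (hN₃ : N₁ ≤ N₃)
    (hs : ∀ x ∈ s, IsResonantPair N N₁ N₃ c k x) :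
    (#s : ℝ) ≤ 24 * (1 + 1 / ε) * (2 * N₁ * (2 * N₃)) ^ (1 + ε) :=
  card_le_rpow_of_zdot_fst_snd_eq hε (by linarith) (by gcongr)
    (fun x hx => (hs x hx).fst_ne_zero) (fun x hx => (hs x hx).zdot_eq)
    (fun x hx y hy => norm_fst_sub_fst_le (hs x hx) (hs y hy))
    fun x hx y hy _ => norm_snd_sub_snd_le (hs x hx) (hs y hy)

lemma exists_card_le_of_N₁_le_N₃ (hε : 0 < ε) :
    ∃ C : ℝ, 1 ≤ C ∧ ∀ (N N₁ N₃ : ℝ) (c : ℤ × ℤ) (k : ℤ) (s : Finset ((ℤ × ℤ) × (ℤ × ℤ))),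
      1 ≤ N → 1 ≤ N₁ → N₁ ≤ N₃ → (∀ x ∈ s, IsResonantPair N N₁ N₃ c k x) →
        (#s : ℝ) ≤ C * (N ^ 2 * N₁ ^ ε) ∧ (#s : ℝ) ≤ C * (N * N₁) ^ (1 + ε) ∧
          (#s : ℝ) ≤ C * (N₁ * N₃) ^ (1 + ε) := by
  obtain ⟨C, hC, hsq⟩ := exists_card_le_sq_mul_rpow hε
  set D := 24 * (1 + 1 / ε) * 4 ^ (1 + ε)
  refine ⟨max C D, hC.trans (le_max_left C D), fun N N₁ N₃ c k s hN hN₁ hN₁₃ hs => ?_⟩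
  have mul_rpow_eq {a b : ℝ} (ha : 1 ≤ a) (hb : 1 ≤ b) :
      24 * (1 + 1 / ε) * (2 * a * (2 * b)) ^ (1 + ε) = D * (a * b) ^ (1 + ε) := by
    rw [show 2 * a * (2 * b) = 4 * (a * b) by ring, Real.mul_rpow (by norm_num) (by positivity)]
    ring
  have card_le_sq : (#s : ℝ) ≤ max C D * (N ^ 2 * N₁ ^ ε) :=
    (hsq N N₁ N₃ c k s hN hN₁ hs).trans (by gcongr; exact le_max_left C D)
  refine ⟨card_le_sq, ?_, ?_⟩
  · obtain hNN₁ | hNN₁ := le_total N₁ N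
    · refine (card_le_rpow_of_N₁_le_N hε hN₁ hNN₁ hs).trans ?_
      rw [mul_rpow_eq hN₁ hN, mul_comm N₁]
      gcongr
      exact le_max_right C D
    · refine card_le_sq.trans ?_
      rw [Real.rpow_add (by positivity), Real.rpow_one, sq]
      gcongr
      exact le_mul_of_one_le_left (by positivity) hN
  · have hN₃ : 1 ≤ N₃ := hN₁.trans hN₁₃
    refine (card_le_rpow_of_N₁_le_N₃ hε hN₁ hN₁₃ hs).trans ?_
    rw [mul_rpow_eq hN₁ hN₃]
    gcongr
    exact le_max_right C D

theorem exists_card_le_sq_min (hε : 0 < ε) :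
    ∃ C : ℝ, 1 ≤ C ∧ ∀ (N N₁ N₃ : ℝ) (c : ℤ × ℤ) (k : ℤ) (s : Finset ((ℤ × ℤ) × (ℤ × ℤ))),
      1 ≤ N → 1 ≤ N₁ → 1 ≤ N₃ → (∀ x ∈ s, IsResonantPair N N₁ N₃ c k x) →
        (#s : ℝ) ≤ C * min (min (N * min N₁ N₃ ^ ε) ((N * N₁) ^ ((1 : ℝ) / 2 + ε)))
          (min ((N * N₃) ^ ((1 : ℝ) / 2 + ε)) ((N₁ * N₃) ^ ((1 : ℝ) / 2 + ε))) ^ 2 := by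
  obtain ⟨C, hC, hcard⟩ := exists_card_le_of_N₁_le_N₃ (mul_pos two_pos hε)
  refine ⟨C, hC, fun N N₁ N₃ c k s hN hN₁ hN₃ hs => ?_⟩
  wlog hN₁₃ : N₁ ≤ N₃ generalizing N₁ N₃ s
  · have key := this N₃ N₁ (s.map (Equiv.prodComm _ _).toEmbedding) hN₃ hN₁
      (forall_mem_map.2 fun x hx => (hs x hx).swap) (le_of_not_ge hN₁₃)
    rw [card_map] at key
    convert key using 3
    rw [min_comm N₁, mul_comm N₁, min_assoc, min_assoc, min_left_comm ((N * N₁) ^ _)]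
  rw [min_eq_left hN₁₃]
  have sq_rpow {X : ℝ} (hX : 0 ≤ X) : (X ^ ((1 : ℝ) / 2 + ε)) ^ 2 = X ^ (1 + 2 * ε) := by
    rw [← Real.rpow_mul_natCast hX]; congr 1; push_cast; ring
  obtain ⟨card_le_N, card_le_NN₁, card_le_N₁N₃⟩ := hcard N N₁ N₃ c k s hN hN₁ hN₁₃ hs
  refine le_mul_sq_min (le_mul_sq_min ?_ ?_) (le_mul_sq_min ?_ ?_)
  · rwa [mul_pow, ← Real.rpow_mul_natCast (by positivity), Nat.cast_two, mul_comm ε]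
  · rwa [sq_rpow (by positivity)]
  · rw [sq_rpow (by positivity)]
    exact card_le_NN₁.trans (by gcongr)
  · rwa [sq_rpow (by positivity)]

end IsResonantPair

section BaseTensor

lemma norm_le_znorm (n : ℤ × ℤ) : ‖n‖ ≤ znorm n := by
  rw [Prod.norm_def, Int.norm_eq_abs, Int.norm_eq_abs, znorm]
  exact max_le (Real.abs_le_sqrt (le_add_of_nonneg_right (sq_nonneg _)))
    (Real.abs_le_sqrt (le_add_of_nonneg_left (sq_nonneg _)))

lemma simDyadic.norm_le {N : ℝ} {n : ℤ × ℤ} (h : simDyadic N n) : ‖n‖ ≤ N := by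
  refine (norm_le_znorm n).trans ?_
  obtain ⟨rfl, hn⟩ | ⟨-, -, hn⟩ := h <;> exact hn

lemma IsDyadic.one_le {N : ℝ} (h : IsDyadic N) : 1 ≤ N := by
  obtain ⟨k, rfl⟩ := h
  exact one_le_pow₀ one_le_two

lemma phiFn_eq_two_mul_zdot (n₁ n₂ n₃ : ℤ × ℤ) :
    phiFn (n₁ - n₂ + n₃) n₁ n₂ n₃ = 2 * zdot (n₁ - n₂) (n₃ - n₂) := by
  simp only [phiFn, nsq, zdot, Prod.fst_add, Prod.snd_add, Prod.fst_sub, Prod.snd_sub]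
  ring

variable {ε N N₁ N₂ N₃ : ℝ} {m : ℤ} {n n₁ n₂ n₃ : ℤ × ℤ}

lemma SMem.isResonantPair (h : SMem N N₁ N₂ N₃ m n n₁ n₂ n₃) :
    IsResonantPair N N₁ N₃ n₂ (m / 2) (n₁ - n₂, n₃ - n₂) := by
  obtain ⟨rfl, ne₁, ne₃, rfl, hn, hn₁, -, hn₃⟩ := h
  refine ⟨?_, ?_, ?_, ?_, ?_, ?_⟩
  · exact fun h : n₁ - n₂ = 0 => ne₃ (by rw [h, zero_add])
  · exact fun h : n₃ - n₂ = 0 => ne₁ (by rw [sub_add_eq_add_sub, add_sub_assoc, h, add_zero])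
  · rw [phiFn_eq_two_mul_zdot, Int.mul_ediv_cancel_left _ two_ne_zero]
  · rw [add_assoc, sub_add_cancel]
    exact hn.norm_le
  · rw [sub_add_cancel]
    exact hn₁.norm_le
  · rw [sub_add_cancel]
    exact hn₃.norm_le

theorem exists_card_le_of_forall_sMem (hε : 0 < ε) :
    ∃ C : ℝ, 1 ≤ C ∧ ∀ (N N₁ N₂ N₃ : ℝ) (m : ℤ) (n₂ : ℤ × ℤ)
      (s : Finset ((ℤ × ℤ) × (ℤ × ℤ) × (ℤ × ℤ))), 1 ≤ N → 1 ≤ N₁ → 1 ≤ N₃ →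
        (∀ t ∈ s, SMem N N₁ N₂ N₃ m t.1 t.2.1 n₂ t.2.2) →
          (#s : ℝ) ≤ C * min (min (N * min N₁ N₃ ^ ε) ((N * N₁) ^ ((1 : ℝ) / 2 + ε)))
            (min ((N * N₃) ^ ((1 : ℝ) / 2 + ε)) ((N₁ * N₃) ^ ((1 : ℝ) / 2 + ε))) ^ 2 := by
  obtain ⟨C, hC, hcard⟩ := IsResonantPair.exists_card_le_sq_min hε
  refine ⟨C, hC, fun N N₁ N₂ N₃ m n₂ s hN hN₁ hN₃ hs => ?_⟩
  let pair (t : (ℤ × ℤ) × (ℤ × ℤ) × (ℤ × ℤ)) := (t.2.1 - n₂, t.2.2 - n₂)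
  have inj : Set.InjOn pair s := fun t ht u hu h => by
    obtain ⟨h₁, h₃⟩ := Prod.mk_inj.1 h
    refine Prod.ext ?_ (Prod.ext (sub_left_injective h₁) (sub_left_injective h₃))
    rw [(hs t ht).1, (hs u hu).1, h₁, sub_left_injective h₃]
  rw [← card_image_of_injOn inj]
  exact hcard N N₁ N₃ n₂ (m / 2) _ hN hN₁ hN₃
    (forall_mem_image.2 fun t ht => (hs t ht).isResonantPair)

lemma tsum_indicator_comp_le_mul_tsum {T X : Type*} {S : Set T} {q : T → X} {g : X → ℝ} {K : ℝ}
    (hK : 0 ≤ K) (hg : ∀ x, 0 ≤ g x) (hsum : Summable g)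
    (hcard : ∀ x (s : Finset T), (∀ t ∈ s, t ∈ S ∧ q t = x) → (#s : ℝ) ≤ K) :
    ∑' t, S.indicator (fun t => g (q t)) t ≤ K * ∑' x, g x := by
  classical
  refine Real.tsum_le_of_sum_le (fun t => Set.indicator_nonneg (fun t _ => hg (q t)) t) fun s => ?_
  calc ∑ t ∈ s, S.indicator (fun t => g (q t)) t
      = ∑ t ∈ s with t ∈ S, g (q t) := by simp only [Set.indicator_apply, sum_filter]
    _ = ∑ x ∈ s.image q, #{t ∈ {t ∈ s | t ∈ S} | q t = x} • g x := by
        rw [← sum_fiberwise_of_maps_to (t := s.image q) (g := q)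
          fun t ht => mem_image_of_mem q (mem_filter.1 ht).1]
        refine sum_congr rfl fun x _ => ?_
        exact sum_eq_card_nsmul fun t ht => by rw [(mem_filter.1 ht).2]
    _ ≤ ∑ x ∈ s.image q, K * g x := by
        gcongr with x
        rw [nsmul_eq_mul]
        gcongr
        · exact hg x
        · exact hcard x _ fun t ht =>
            ⟨(mem_filter.1 (mem_filter.1 ht).1).2, (mem_filter.1 ht).2⟩
    _ ≤ K * ∑' x, g x := by
        rw [← mul_sum]
        gcongr
        exact hsum.sum_le_tsum _ fun x _ => hg x

variable {E : Type*} [NormedAddCommGroup E] [NormedSpace ℝ E]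

lemma tsum_hten_smul (f : ℤ × ℤ → E) (n n₁ n₃ : ℤ × ℤ) :
    ∑' n₂, hten N N₁ N₂ N₃ m n n₁ n₂ n₃ • f n₂ =
      hten N N₁ N₂ N₃ m n n₁ (n₁ + n₃ - n) n₃ • f (n₁ + n₃ - n) := by
  refine tsum_eq_single _ fun n₂ hn₂ => ?_
  have not_mem : ¬SMem N N₁ N₂ N₃ m n n₁ n₂ n₃ := fun h =>
    hn₂ (by rw [h.1]; abel)
  rw [hten, if_neg not_mem, zero_smul]

lemma norm_tsum_hten_smul_sq (f : ℤ × ℤ → E) (t : (ℤ × ℤ) × (ℤ × ℤ) × (ℤ × ℤ)) :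
    ‖∑' n₂, hten N N₁ N₂ N₃ m t.1 t.2.1 n₂ t.2.2 • f n₂‖ ^ 2 =
      {t | SMem N N₁ N₂ N₃ m t.1 t.2.1 (t.2.1 + t.2.2 - t.1) t.2.2}.indicator
        (fun t => ‖f (t.2.1 + t.2.2 - t.1)‖ ^ 2) t := by
  rw [tsum_hten_smul, hten]
  by_cases h : SMem N N₁ N₂ N₃ m t.1 t.2.1 (t.2.1 + t.2.2 - t.1) t.2.2
  · rw [if_pos h, one_smul, Set.indicator_of_mem (by exact h)]
  · rw [if_neg h, zero_smul, norm_zero, zero_pow two_ne_zero, Set.indicator_of_notMem (by exact h)]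

end BaseTensor

theorem stmt14_general {E : Type*} [NormedAddCommGroup E] [NormedSpace ℝ E] {ε : ℝ} (hε : 0 < ε) :
    ∃ C : ℝ, 0 < C ∧ ∀ N N₁ N₂ N₃ : ℝ, 1 ≤ N → 1 ≤ N₁ → 1 ≤ N₃ → ∀ m : ℤ,
      ∀ f : ℤ × ℤ → E, Summable (fun x => ‖f x‖ ^ 2) →
        √(∑' t : (ℤ × ℤ) × (ℤ × ℤ) × (ℤ × ℤ),
            ‖∑' n₂ : ℤ × ℤ, hten N N₁ N₂ N₃ m t.1 t.2.1 n₂ t.2.2 • f n₂‖ ^ 2) ≤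
          C * min (min (N * (min N₁ N₃) ^ ε) ((N * N₁) ^ ((1 : ℝ) / 2 + ε)))
                  (min ((N * N₃) ^ ((1 : ℝ) / 2 + ε)) ((N₁ * N₃) ^ ((1 : ℝ) / 2 + ε))) *
            √(∑' x : ℤ × ℤ, ‖f x‖ ^ 2) := by
  obtain ⟨C, hC, hcard⟩ := exists_card_le_of_forall_sMem hε
  have C_pos : 0 < C := zero_lt_one.trans_le hC
  refine ⟨√C, Real.sqrt_pos.2 C_pos, fun N N₁ N₂ N₃ hN hN₁ hN₃ m f hf => ?_⟩
  set B := min (min (N * (min N₁ N₃) ^ ε) ((N * N₁) ^ ((1 : ℝ) / 2 + ε)))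
    (min ((N * N₃) ^ ((1 : ℝ) / 2 + ε)) ((N₁ * N₃) ^ ((1 : ℝ) / 2 + ε)))
  have B_nonneg : 0 ≤ B := by positivity
  simp only [norm_tsum_hten_smul_sq]
  calc _ ≤ √(C * B ^ 2 * ∑' x, ‖f x‖ ^ 2) := by
        refine Real.sqrt_le_sqrt ?_
        refine tsum_indicator_comp_le_mul_tsum (by positivity) (fun x => sq_nonneg ‖f x‖) hf
          fun n₂ s hs => hcard N N₁ N₂ N₃ m n₂ s hN hN₁ hN₃ fun t ht => ?_
        obtain ⟨hmem, rfl⟩ := hs t ht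
        exact hmem
    _ = √C * B * √(∑' x, ‖f x‖ ^ 2) := by
        rw [Real.sqrt_mul (by positivity), Real.sqrt_mul C_pos.le, Real.sqrt_sq B_nonneg]

theorem stmt14 (ε : ℝ) (hε : 0 < ε) :
    ∃ C : ℝ, 0 < C ∧ ∀ N N₁ N₂ N₃ : ℝ,
      IsDyadic N → IsDyadic N₁ → IsDyadic N₂ → IsDyadic N₃ → ∀ m : ℤ,
      ∀ f : ℤ × ℤ → ℝ, Summable (fun x => f x ^ 2) →
        Real.sqrt (∑' t : (ℤ × ℤ) × (ℤ × ℤ) × (ℤ × ℤ),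
            (∑' n₂ : ℤ × ℤ, hten N N₁ N₂ N₃ m t.1 t.2.1 n₂ t.2.2 * f n₂) ^ 2) ≤
          C * min (min (N * (min N₁ N₃) ^ ε) ((N * N₁) ^ ((1 : ℝ) / 2 + ε)))
                  (min ((N * N₃) ^ ((1 : ℝ) / 2 + ε)) ((N₁ * N₃) ^ ((1 : ℝ) / 2 + ε))) *
            Real.sqrt (∑' x : ℤ × ℤ, f x ^ 2) := by
  obtain ⟨C, hC, hbound⟩ := stmt14_general (E := ℝ) hε
  refine ⟨C, hC, fun N N₁ N₂ N₃ hN hN₁ _ hN₃ m f hf => ?_⟩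
  simpa only [Real.norm_eq_abs, sq_abs, smul_eq_mul] using
    hbound N N₁ N₂ N₃ hN.one_le hN₁.one_le hN₃.one_le m f (by simpa using hf)
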